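/- Every simple graph whose vertex set can be partitioned into a clique A and a clique {u, v} of size 2 (with arbitrary edges between A and {u, v}) is word-representable. In other words, every co-bipartite graph in which one of the two cliques of the partition has exactly 2 vertices is word-representable. -/

import Mathlib

/-- Two distinct letters `x` and `y` alternate in the word `w` if, after deleting all
letters other than `x` and `y`, no two consecutive letters of the remaining word are equal. -/
def Alternate {V : Type*} [DecidableEq V] (w : List V) (x y : V) : Prop :=
  (w.filter fun z => decide (z = x ∨ z = y)).Chain' (· ≠ ·)

/-- A word `w` represents the simple graph `G` if every vertex occurs in `w` at least once
and two distinct vertices alternate in `w` exactly when they are adjacent in `G`. -/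
def Represents {V : Type*} [DecidableEq V] (G : SimpleGraph V) (w : List V) : Prop :=
  (∀ v : V, v ∈ w) ∧ ∀ x y : V, x ≠ y → (Alternate w x y ↔ G.Adj x y)

/-- A simple graph is word-representable if some word represents it. -/
def WordRepresentable {V : Type*} [DecidableEq V] (G : SimpleGraph V) : Prop :=
  ∃ w : List V, Represents G w

/-!
In a word in which every letter occurs exactly twice, `x` and `y` alternate exactly when `y` occurs
once between the two occurrences of `x`. List the clique as `P = U B W N`, where the neighbours
of `u` in the clique are `U B` and those of `v` are `B W`. All letters of `P` alternate in `P P`,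
and inserting `u` around a factor `U B` and `v` around a factor `B W` of `P P` gives them the
required neighbours. Making both insertions in the first copy of `P` makes `u` and `v` alternate;
making them in different copies keeps them from alternating.
-/

lemma count_eq_one_iff_mem {V : Type*} [DecidableEq V] {l : List V} {x : V} (hl : l.Nodup) :
    l.count x = 1 ↔ x ∈ l :=
  ⟨fun hx => List.count_pos_iff.mp (by omega), List.count_eq_one_of_mem hl⟩

section Alternate

variable {V : Type*} [DecidableEq V] {x y : V} {w : List V}

lemma alternate_comm : Alternate w x y ↔ Alternate w y x := by
  simp only [Alternate, or_comm]

lemma alternate_filter_iff {p : V → Bool} (hx : p x) (hy : p y) :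
    Alternate (w.filter p) x y ↔ Alternate w x y := by
  have absorb : ∀ z, (decide (z = x ∨ z = y) && p z) = decide (z = x ∨ z = y) := by
    intro z
    by_cases hz : z = x ∨ z = y
    · rcases hz with rfl | rfl <;> simp [hx, hy]
    · simp [hz]
  simp only [Alternate, List.filter_filter, absorb]

lemma filter_eq_or_eq_of_notMem (hx : x ∉ w) :
    w.filter (fun z => decide (z = x ∨ z = y)) = List.replicate (w.count y) y := by
  rw [← List.filter_eq]
  refine List.filter_congr fun z hz => ?_
  have hzx : z ≠ x := ne_of_mem_of_not_mem hz hx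
  simp only [hzx, false_or]

lemma alternate_iff_count_eq_one {L M R : List V} (hw : w = L ++ x :: (M ++ x :: R))
    (hx : w.count x = 2) (hy : w.count y = 2) (hxy : x ≠ y) :
    Alternate w x y ↔ M.count y = 1 := by
  subst hw
  simp only [List.count_append, List.count_cons_self, List.count_cons_of_ne hxy] at hx hy
  have hL : x ∉ L := List.count_eq_zero.mp (by omega)
  have hM : x ∉ M := List.count_eq_zero.mp (by omega)
  have hR : x ∉ R := List.count_eq_zero.mp (by omega)
  have restrict : (L ++ x :: (M ++ x :: R)).filter (fun z => decide (z = x ∨ z = y)) =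
      List.replicate (L.count y) y ++
        x :: (List.replicate (M.count y) y ++ x :: List.replicate (R.count y) y) := by
    simp only [List.filter_append, List.filter_cons, filter_eq_or_eq_of_notMem, hL, hM, hR,
      not_false_eq_true, true_or, decide_true, if_true]
  rw [Alternate, restrict, List.Chain']
  generalize L.count y = a, M.count y = b, R.count y = c at hy ⊢
  obtain rfl : c = 2 - a - b := by omega
  have ha : a ≤ 2 := by omega
  have hb : b ≤ 2 := by omega
  interval_cases a <;> interval_cases b <;> simp_all [List.replicate, hxy.symm]

lemma alternate_append_self {P : List V} (hP : P.Nodup) (hx : x ∈ P) (hy : y ∈ P) (hxy : x ≠ y) :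
    Alternate (P ++ P) x y := by
  have count_two : ∀ z ∈ P, (P ++ P).count z = 2 := fun z hz => by
    rw [List.count_append, List.count_eq_one_of_mem hP hz]
  obtain ⟨L, R, rfl⟩ := List.append_of_mem hx
  refine (alternate_iff_count_eq_one (L := L) (M := R ++ L) (R := R) (by simp)
    (count_two x hx) (count_two y hy) hxy).mpr ?_
  have hy_once := List.count_eq_one_of_mem hP hy
  rw [List.count_append, List.count_cons_of_ne hxy] at hy_once
  rw [List.count_append, add_comm, hy_once]

lemma alternate_of_filter_eq_append_self {p : V → Bool} {P : List V} (hP : P.Nodup)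
    (hw : w.filter p = P ++ P) (hx : x ∈ P) (hy : y ∈ P) (hxy : x ≠ y) : Alternate w x y := by
  have p_of_mem : ∀ z ∈ P, p z := fun z hz =>
    List.of_mem_filter (hw ▸ List.mem_append_left P hz : z ∈ w.filter p)
  rw [← alternate_filter_iff (p_of_mem x hx) (p_of_mem y hy), hw]
  exact alternate_append_self hP hx hy hxy

lemma count_eq_two_of_filter_eq_append_self {p : V → Bool} {P : List V} (hP : P.Nodup)
    (hw : w.filter p = P ++ P) (hx : x ∈ P) : w.count x = 2 := by
  have hpx : p x := List.of_mem_filter (hw ▸ List.mem_append_left P hx : x ∈ w.filter p)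
  rw [← List.count_filter hpx, hw, List.count_append, List.count_eq_one_of_mem hP hx]

end Alternate

lemma exists_nodup_append_of_subset {V : Type*} {R S T : Finset V} (hS : S ⊆ R) (hT : T ⊆ R) :
    ∃ U B W N : List V, (U ++ B ++ W ++ N).Nodup ∧ (∀ x, x ∈ U ++ B ++ W ++ N ↔ x ∈ R) ∧
      (∀ x, x ∈ U ++ B ↔ x ∈ S) ∧ ∀ x, x ∈ B ++ W ↔ x ∈ T := by
  classical
  refine ⟨(S \ T).toList, (S ∩ T).toList, (T \ S).toList, (R \ (S ∪ T)).toList, ?_, ?_, ?_, ?_⟩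
  · simp only [List.nodup_append', Finset.nodup_toList, List.disjoint_left, List.mem_append,
      Finset.mem_toList]
    grind
  all_goals
    intro x
    have hxS := @hS x
    have hxT := @hT x
    simp only [List.mem_append, Finset.mem_toList]
    grind

section TwoLetters

variable {V : Type*} {G : SimpleGraph V} {u v : V} {U B W N : List V}

/-- `U B W N` is an enumeration of the vertices other than `u` and `v`, without repetitions, in
which the neighbours of `u` form the factor `U B` and those of `v` form the factor `B W`. -/
structure IsNeighborEnumeration (G : SimpleGraph V) (u v : V) (U B W N : List V) : Prop where
  nodup : (U ++ B ++ W ++ N).Nodup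
  mem_iff : ∀ x, x ∈ U ++ B ++ W ++ N ↔ x ≠ u ∧ x ≠ v
  mem_left_iff : ∀ x, x ∈ U ++ B ↔ x ≠ v ∧ G.Adj u x
  mem_right_iff : ∀ x, x ∈ B ++ W ↔ x ≠ u ∧ G.Adj v x

lemma exists_isNeighborEnumeration [Finite V] (G : SimpleGraph V) (u v : V) :
    ∃ U B W N, IsNeighborEnumeration G u v U B W N := by
  classical
  have := Fintype.ofFinite V
  obtain ⟨U, B, W, N, hP, mem_P, mem_UB, mem_BW⟩ := exists_nodup_append_of_subset
    (R := {x | x ≠ u ∧ x ≠ v}) (S := {x | x ≠ v ∧ G.Adj u x}) (T := {x | x ≠ u ∧ G.Adj v x})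
    (fun x => by grind [G.irrefl]) (fun x => by grind [G.irrefl])
  exact ⟨U, B, W, N, hP, by simpa using mem_P, by simpa using mem_UB, by simpa using mem_BW⟩

variable [DecidableEq V]

/-- The word obtained from `w` by deleting the letters `u` and `v`. -/
def deleteLetters (u v : V) (w : List V) : List V :=
  w.filter fun z => z != u && z != v

/-- The word `P P` with `P = U B W N`, in which the first `U B` is enclosed by two letters `u` and
the first `B W` by two letters `v`. -/
def crossingWord (u v : V) (U B W N : List V) : List V :=
  u :: U ++ v :: B ++ u :: W ++ v :: N ++ (U ++ B ++ W ++ N)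

/-- The word `P P` with `P = U B W N`, in which the first `U B` is enclosed by two letters `u` and
the second `B W` by two letters `v`. -/
def separatedWord (u v : V) (U B W N : List V) : List V :=
  u :: (U ++ B) ++ u :: (W ++ N) ++ (U ++ v :: (B ++ W) ++ v :: N)

lemma count_deleteLetters {w : List V} {x : V} (hxu : x ≠ u) (hxv : x ≠ v) :
    (deleteLetters u v w).count x = w.count x :=
  List.count_filter (by simp [hxu, hxv])

lemma represents_of_isClique_compl_pair {w : List V} (hclique : G.IsClique {u, v}ᶜ)
    (mem_w : ∀ x, x ∈ w) (alternate_u : ∀ x, x ≠ u → (Alternate w u x ↔ G.Adj u x))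
    (alternate_v : ∀ x, x ≠ u → x ≠ v → (Alternate w v x ↔ G.Adj v x))
    (alternate_clique : Set.Pairwise {u, v}ᶜ (Alternate w)) : Represents G w := by
  refine ⟨mem_w, fun x y hxy => ?_⟩
  by_cases hxu : x = u
  · exact hxu ▸ alternate_u y (hxu ▸ hxy.symm)
  by_cases hyu : y = u
  · rw [alternate_comm, G.adj_comm]
    exact hyu ▸ alternate_u x hxu
  by_cases hxv : x = v
  · exact hxv ▸ alternate_v y hyu (hxv ▸ hxy.symm)
  by_cases hyv : y = v
  · rw [alternate_comm, G.adj_comm]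
    exact hyv ▸ alternate_v x hxu hxv
  have hx : x ∈ ({u, v}ᶜ : Set V) := by simp [hxu, hxv]
  have hy : y ∈ ({u, v}ᶜ : Set V) := by simp [hyu, hyv]
  exact iff_of_true (alternate_clique hx hy hxy) (hclique hx hy hxy)

namespace IsNeighborEnumeration

lemma deleteLetters_blocks (h : IsNeighborEnumeration G u v U B W N) :
    deleteLetters u v U = U ∧ deleteLetters u v B = B ∧ deleteLetters u v W = W ∧
      deleteLetters u v N = N := by
  have mem_iff := h.mem_iff
  simp only [List.mem_append] at mem_iff
  simp only [deleteLetters, List.filter_eq_self, Bool.and_eq_true, bne_iff_ne]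
  grind

lemma count_blocks_left (h : IsNeighborEnumeration G u v U B W N) :
    U.count u = 0 ∧ B.count u = 0 ∧ W.count u = 0 ∧ N.count u = 0 := by
  have mem_iff := h.mem_iff u
  simp only [List.count_eq_zero]
  grind

lemma count_blocks_right (h : IsNeighborEnumeration G u v U B W N) :
    U.count v = 0 ∧ B.count v = 0 ∧ W.count v = 0 ∧ N.count v = 0 := by
  have mem_iff := h.mem_iff v
  simp only [List.count_eq_zero]
  grind

lemma represents (h : IsNeighborEnumeration G u v U B W N) (hclique : G.IsClique {u, v}ᶜ)
    {w Lu Mu Ru Lv Mv Rv : List V}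
    (hw : deleteLetters u v w = (U ++ B ++ W ++ N) ++ (U ++ B ++ W ++ N))
    (hu : w.count u = 2) (hv : w.count v = 2)
    (hwu : w = Lu ++ u :: (Mu ++ u :: Ru)) (hwv : w = Lv ++ v :: (Mv ++ v :: Rv))
    (hMu : deleteLetters u v Mu = U ++ B) (hMv : deleteLetters u v Mv = B ++ W)
    (hMuv : Mu.count v = 1 ↔ G.Adj u v) : Represents G w := by
  have count_two : ∀ x, w.count x = 2 := by
    intro x
    by_cases hx : x ∈ U ++ B ++ W ++ N
    · exact count_eq_two_of_filter_eq_append_self h.nodup hw hx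
    · obtain rfl | rfl : x = u ∨ x = v := by
        simpa only [h.mem_iff, not_and_or, not_not] using hx
      exacts [hu, hv]
  refine represents_of_isClique_compl_pair hclique
    (fun x => List.count_pos_iff.mp (by simp only [count_two, Nat.ofNat_pos])) ?_ ?_ ?_
  · intro x hxu
    rw [alternate_iff_count_eq_one hwu hu (count_two x) hxu.symm]
    by_cases hxv : x = v
    · rwa [hxv]
    · have hUB : (U ++ B).Nodup := h.nodup.of_append_left.of_append_left
      rw [← count_deleteLetters hxu hxv, hMu, count_eq_one_iff_mem hUB, h.mem_left_iff,
        and_iff_right hxv]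
  · intro x hxu hxv
    have hBW : (B ++ W).Nodup := by grind [h.nodup]
    rw [alternate_iff_count_eq_one hwv hv (count_two x) hxv.symm, ← count_deleteLetters hxu hxv,
      hMv, count_eq_one_iff_mem hBW, h.mem_right_iff, and_iff_right hxu]
  · intro x hx y hy hxy
    simp only [Set.mem_compl_iff, Set.mem_insert_iff, Set.mem_singleton_iff, not_or] at hx hy
    exact alternate_of_filter_eq_append_self h.nodup hw ((h.mem_iff x).mpr hx)
      ((h.mem_iff y).mpr hy) hxy

lemma represents_crossingWord (h : IsNeighborEnumeration G u v U B W N)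
    (hclique : G.IsClique {u, v}ᶜ) (hAdj : G.Adj u v) :
    Represents G (crossingWord u v U B W N) := by
  have hdel := h.deleteLetters_blocks
  simp only [deleteLetters] at hdel
  refine h.represents hclique
    (Lu := []) (Mu := U ++ v :: B) (Ru := W ++ v :: N ++ (U ++ B ++ W ++ N))
    (Lv := u :: U) (Mv := B ++ u :: W) (Rv := N ++ (U ++ B ++ W ++ N)) ?_ ?_ ?_ ?_ ?_ ?_ ?_ ?_
  · simp [crossingWord, deleteLetters, hdel]
  · simp [crossingWord, h.count_blocks_left, hAdj.ne']
  · simp [crossingWord, h.count_blocks_right, hAdj.ne]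
  · simp [crossingWord]
  · simp [crossingWord]
  · simp [deleteLetters, hdel]
  · simp [deleteLetters, hdel]
  · simp [h.count_blocks_right, hAdj]

lemma represents_separatedWord (h : IsNeighborEnumeration G u v U B W N)
    (hclique : G.IsClique {u, v}ᶜ) (huv : u ≠ v) (hAdj : ¬G.Adj u v) :
    Represents G (separatedWord u v U B W N) := by
  have hdel := h.deleteLetters_blocks
  simp only [deleteLetters] at hdel
  refine h.represents hclique
    (Lu := []) (Mu := U ++ B) (Ru := W ++ N ++ (U ++ v :: (B ++ W) ++ v :: N))
    (Lv := u :: (U ++ B) ++ u :: (W ++ N) ++ U) (Mv := B ++ W) (Rv := N) ?_ ?_ ?_ ?_ ?_ ?_ ?_ ?_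
  · simp [separatedWord, deleteLetters, hdel]
  · simp [separatedWord, h.count_blocks_left, huv.symm]
  · simp [separatedWord, h.count_blocks_right, huv]
  · simp [separatedWord]
  · simp [separatedWord]
  · simp [deleteLetters, hdel]
  · simp [deleteLetters, hdel]
  · simp [h.count_blocks_right, hAdj]

end IsNeighborEnumeration

end TwoLetters

theorem cobipartite_clique_two_wordRepresentable_general {V : Type*} [Finite V] [DecidableEq V]
    (G : SimpleGraph V) (u v : V) (huv : u ≠ v) (hclique : G.IsClique {u, v}ᶜ) :
    WordRepresentable G := by
  obtain ⟨U, B, W, N, h⟩ := exists_isNeighborEnumeration G u v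
  by_cases hAdj : G.Adj u v
  · exact ⟨_, h.represents_crossingWord hclique hAdj⟩
  · exact ⟨_, h.represents_separatedWord hclique huv hAdj⟩

/-- Every co-bipartite graph whose vertex set is partitioned into a clique `A` and a
clique `{u, v}` of size 2 is word-representable. -/
theorem cobipartite_clique_two_wordRepresentable
    {V : Type*} [Fintype V] [DecidableEq V] (G : SimpleGraph V)
    (A : Set V) (u v : V) (huv : u ≠ v)
    (hpart : ∀ x : V, x ∈ A ↔ x ≠ u ∧ x ≠ v)
    (hA : G.IsClique A) (hAdj : G.Adj u v) :
    WordRepresentable G := by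
  have hclique : G.IsClique {u, v}ᶜ := hA.subset fun x hx => by simpa [hpart] using hx
  exact cobipartite_clique_two_wordRepresentable_general G u v huv hclique
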